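/- For every finite Souslin measurable colouring c of the set 𝓔_∞ of all equivalence relations on ω with infinitely many equivalence classes, there exists X ∈ 𝓔_∞ such that c is constant on 𝓔_∞ ↾ X, the set of all members of 𝓔_∞ that are coarsenings of X. -/

import Mathlib

open Set

namespace DualRamsey

/-- `F` is a coarsening of `E` (written `F ≤ E` in the paper): every class of `F`
is a union of classes of `E`. -/
def Coarsens {X : Type*} (F E : Setoid X) : Prop := ∀ a b, E.r a b → F.r a b

/-- The set of equivalence classes of a setoid. -/
def classes {X : Type*} (E : Setoid X) : Set (Set X) := {C | ∃ x, C = {y | E.r x y}}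

/-- The set of minimal representatives of the classes of an equivalence relation on ℕ. -/
def minReps (E : Setoid ℕ) : Set ℕ := {n | ∀ m, E.r n m → n ≤ m}

/-- `pRep E k` is `p_k(E)`, the k-th minimal representative in increasing order. -/
noncomputable def pRep (E : Setoid ℕ) (k : ℕ) : ℕ := Nat.nth (· ∈ minReps E) k

/-- `approx n E` is the n-th approximation `r_n(E)`: `E` restricted to `{0,…,p_n(E)-1}`,
identified with its graph. -/
noncomputable def approx (n : ℕ) (E : Setoid ℕ) : Set (ℕ × ℕ) :=
  {q | q.1 < pRep E n ∧ q.2 < pRep E n ∧ E.r q.1 q.2}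

/-- Basic set `[a, E]` relative to a space `S` of equivalence relations. -/
noncomputable def basicSet (S : Set (Setoid ℕ)) (a : Set (ℕ × ℕ)) (E : ↥S) : Set ↥S :=
  {F | Coarsens F.1 E.1 ∧ ∃ n, approx n F.1 = a}

/-- The Ellentuck topology on a space `S` of equivalence relations. -/
noncomputable def ellentuckTop (S : Set (Setoid ℕ)) : TopologicalSpace ↥S :=
  TopologicalSpace.generateFrom {U | ∃ a E, U = basicSet S a E}

def IsRamsey (S : Set (Setoid ℕ)) (X : Set ↥S) : Prop :=
  ∀ (a : Set (ℕ × ℕ)) (B : ↥S), (basicSet S a B).Nonempty →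
    ∃ A ∈ basicSet S a B, basicSet S a A ⊆ X ∨ basicSet S a A ∩ X = ∅

def IsRamseyNull (S : Set (Setoid ℕ)) (X : Set ↥S) : Prop :=
  ∀ (a : Set (ℕ × ℕ)) (B : ↥S), (basicSet S a B).Nonempty →
    ∃ A ∈ basicSet S a B, basicSet S a A ∩ X = ∅

/-- The property of Baire with respect to the Ellentuck topology. -/
noncomputable def HasBP (S : Set (Setoid ℕ)) (X : Set ↥S) : Prop :=
  ∃ O M : Set ↥S, (ellentuckTop S).IsOpen O ∧ @IsMeagre _ (ellentuckTop S) M ∧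
    X = (O \ M) ∪ (M \ O)

/-- The Souslin operation applied to a scheme indexed by finite sequences of naturals. -/
def souslinOp {X : Type*} (A : List ℕ → Set X) : Set X :=
  ⋃ x : ℕ → ℕ, ⋂ n : ℕ, A ((List.range n).map x)

/-- `Y` belongs to the smallest field of sets containing all `t`-open sets and
closed under the Souslin operation. -/
def SouslinMeasurable {X : Type*} (t : TopologicalSpace X) (Y : Set X) : Prop :=
  ∀ 𝒜 : Set (Set X),
    (∀ U, t.IsOpen U → U ∈ 𝒜) →
    (∀ A ∈ 𝒜, Aᶜ ∈ 𝒜) →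
    (∀ A ∈ 𝒜, ∀ B ∈ 𝒜, A ∪ B ∈ 𝒜) →
    (∀ f : List ℕ → Set X, (∀ s, f s ∈ 𝒜) → souslinOp f ∈ 𝒜) →
    Y ∈ 𝒜

/-- The graph of an equivalence relation as a boolean-valued function. -/
noncomputable def graphMap {X : Type*} (E : Setoid X) : X × X → Bool :=
  fun q => @decide (E.r q.1 q.2) (Classical.dec _)

/-- The metrizable topology on a space of equivalence relations, as a subspace of
`2^(X × X)` via graphs. -/
noncomputable def graphTop {X : Type*} (S : Set (Setoid X)) : TopologicalSpace ↥S :=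
  TopologicalSpace.induced (fun E => graphMap E.1) inferInstance



/-- `𝓔_∞`: equivalence relations on ℕ with infinitely many classes. -/
def Einf : Set (Setoid ℕ) := {E | (classes E).Infinite}

section Words

attribute [local instance] Ultrafilter.mul Ultrafilter.semigroup

theorem map_mul_ultra {M N : Type*} [Semigroup M] [Semigroup N] (f : M → N)
    (hf : ∀ x y, f (x * y) = f x * f y) (U V : Ultrafilter M) :
    Ultrafilter.map f (U * V) = Ultrafilter.map f U * Ultrafilter.map f V := by
  apply Ultrafilter.coe_inj.mp
  apply Filter.ext'
  intro p
  rw [Ultrafilter.eventually_mul]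
  simp only [Ultrafilter.coe_map, Filter.eventually_map]
  rw [Ultrafilter.eventually_mul]
  simp only [hf]

/-- Existence of minimal closed left ideals. -/
theorem exists_min_left_ideal {M : Type*} [Semigroup M] [Nonempty M] :
    ∃ L : Set (Ultrafilter M), L.Nonempty ∧ (∀ p, ∀ q ∈ L, p * q ∈ L) ∧
      ∀ p ∈ L, ∀ q ∈ L, ∃ r, p = r * q := by
  let S : Set (Set (Ultrafilter M)) :=
    { N | IsClosed N ∧ N.Nonempty ∧ ∀ p, ∀ q ∈ N, p * q ∈ N }
  have hex : ∃ N', Minimal (· ∈ S) N' := by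
    refine zorn_superset _ fun c hcs hc => ?_
    refine
      ⟨⋂₀ c, ⟨isClosed_sInter fun t ht => (hcs ht).1, ?_, fun m m' hm' => ?_⟩, fun s hs =>
        Set.sInter_subset_of_mem hs⟩
    · obtain rfl | hcnemp := c.eq_empty_or_nonempty
      · rw [Set.sInter_empty]
        apply Set.univ_nonempty
      convert!
        @IsCompact.nonempty_iInter_of_directed_nonempty_isCompact_isClosed _ _ _ hcnemp.coe_sort
          ((↑) : c → Set (Ultrafilter M)) ?_ ?_ ?_ ?_
      · exact Set.sInter_eq_iInter
      · refine DirectedOn.directed_val (IsChain.directedOn hc.symm)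
      exacts [fun i => (hcs i.prop).2.1, fun i => (hcs i.prop).1.isCompact,
        fun i => (hcs i.prop).1]
    · rw [Set.mem_sInter]
      exact fun t ht => (hcs ht).2.2 m m' (Set.mem_sInter.mp hm' t ht)
  obtain ⟨L, hL⟩ := hex
  obtain ⟨hc, hne, hid⟩ := hL.prop
  refine ⟨L, hne, hid, ?_⟩
  intro p hp q hq
  have h1 : Set.range (fun r : Ultrafilter M => r * q) = L := by
    apply hL.eq_of_subset
    · refine ⟨?_, Set.range_nonempty _, ?_⟩
      · rw [← Set.image_univ]
        exact (Ultrafilter.continuous_mul_left q).isClosedMap _ isClosed_univ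
      · rintro p' _ ⟨r, rfl⟩
        exact ⟨p' * r, mul_assoc _ _ _⟩
    · rintro _ ⟨r, rfl⟩
      exact hid _ _ hq
  rw [← h1] at hp
  obtain ⟨r, hr⟩ := hp
  exact ⟨r, hr.symm⟩

/-- Substitution of a letter for the variable. -/
def sub {A : Type*} (a : A) (w : List (Option A)) : List A := w.map (fun o => o.getD a)

theorem exists_good_ultra (A : Type*) [Nonempty A] :
    ∃ v : Ultrafilter (FreeMonoid (Option A)),
      (∀ᶠ y in v, ∃ t : List (Option A), FreeMonoid.toList y = none :: t) ∧
      ∀ a b : A, Ultrafilter.map (fun y => FreeMonoid.map (fun o : Option A => o.getD a) y) v *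
        Ultrafilter.map (fun y => FreeMonoid.map (fun o : Option A => o.getD b) y) v =
        Ultrafilter.map (fun y => FreeMonoid.map (fun o : Option A => o.getD a) y) v := by
  obtain ⟨L, ⟨w, hw⟩, hid, hmin⟩ := exists_min_left_ideal (M := FreeMonoid A)
  let J : Set (FreeMonoid (Option A)) :=
    {y | ∃ t : List (Option A), FreeMonoid.toList y = none :: t}
  let w' : Ultrafilter (FreeMonoid (Option A)) :=
    Ultrafilter.map (fun y => FreeMonoid.map (fun o : A => some o) y) w
  have hJ : ∀ U V : Ultrafilter (FreeMonoid (Option A)), J ∈ U → J ∈ U * V := by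
    intro U V h
    have : ∀ᶠ y in ↑(U * V), y ∈ J := by
      rw [Ultrafilter.eventually_mul]
      filter_upwards [h] with x hx
      refine Filter.Eventually.of_forall fun y => ?_
      obtain ⟨t, ht⟩ := hx
      exact ⟨t ++ FreeMonoid.toList y, by rw [FreeMonoid.toList_mul, ht]; rfl⟩
    exact this
  obtain ⟨v, ⟨j, hj, rfl⟩, hv⟩ := exists_idempotent_in_compact_subsemigroup
    (M := Ultrafilter (FreeMonoid (Option A))) Ultrafilter.continuous_mul_left
    ((fun r => r * w') '' {u | J ∈ u})
    (by
      refine Set.Nonempty.image _ ⟨pure (FreeMonoid.ofList [none]), ?_⟩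
      exact ⟨[], rfl⟩)
    (((ultrafilter_isClosed_basic J).isCompact).image (Ultrafilter.continuous_mul_left w'))
    (by
      rintro _ ⟨x, hx, rfl⟩ _ ⟨y, hy, rfl⟩
      refine ⟨x * (w' * y), hJ _ _ hx, ?_⟩
      simp only [mul_assoc])
  refine ⟨j * w', hJ _ _ hj, ?_⟩
  have hm : ∀ a : A, ∀ U V : Ultrafilter (FreeMonoid (Option A)),
    Ultrafilter.map (fun y => FreeMonoid.map (fun o : Option A => o.getD a) y) (U * V) = 
    Ultrafilter.map (fun y => FreeMonoid.map (fun o : Option A => o.getD a) y) U *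
    Ultrafilter.map (fun y => FreeMonoid.map (fun o : Option A => o.getD a) y) V := fun a U V =>
    map_mul_ultra _ (fun x y => map_mul _ x y) U V
  have hwa : ∀ a : A, 
      Ultrafilter.map (fun y => FreeMonoid.map (fun o : Option A => o.getD a) y) w' = w := by
    intro a
    change Ultrafilter.map _ (Ultrafilter.map _ w) = w
    rw [Ultrafilter.map_map]
    convert Ultrafilter.map_id w
    ext y
    simp only [Function.comp, id]
    rw [← MonoidHom.comp_apply, ← FreeMonoid.map_comp]
    have : (fun o : Option A => o.getD a) ∘ (fun o : A => some o) = id := by ext; rfl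
    rw [this, FreeMonoid.map_id]; rfl
  have hinL : ∀ a, Ultrafilter.map (fun y => FreeMonoid.map (fun o : Option A => o.getD a) y)
      (j * w') ∈ L := by
    intro a
    rw [hm, hwa]
    exact hid _ _ hw
  intro a b
  obtain ⟨r, hr⟩ := hmin _ (hinL a) _ (hinL b)
  rw [hr, mul_assoc, ← hm, hv]

theorem words_closed {A : Type*} [Finite A] [Nonempty A] (P : List A → Prop) :
    ∃ (b : Prop) (Q : Set (List A)), Q.Nonempty ∧ (∀ x ∈ Q, (P x ↔ b)) ∧
      ∀ X : Set (List A), X.Finite → X ⊆ Q → ∃ t : List (Option A),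
        ∀ x ∈ X, ∀ a : A, x ++ sub a (none :: t) ∈ Q := by
  obtain ⟨v, hv, hp⟩ := exists_good_ultra A
  let p : A → Ultrafilter (FreeMonoid A) := fun a =>
    Ultrafilter.map (fun y => FreeMonoid.map (fun o : Option A => o.getD a) y) v
  have hp' : ∀ a b, p a * p b = p a := hp
  let a0 : A := Classical.arbitrary A
  obtain ⟨b, hb⟩ : ∃ b : Prop, ∀ᶠ x in p a0, (P (FreeMonoid.toList x) ↔ b) := by
    rcases Ultrafilter.em (p a0) (fun x => P (FreeMonoid.toList x)) with h | h
    · exact ⟨True, h.mono fun x hx => by simpa using hx⟩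
    · exact ⟨False, h.mono fun x hx => by simpa using hx⟩
  let R : FreeMonoid A → Prop := fun x => (P (FreeMonoid.toList x) ↔ b)
  let Q : FreeMonoid A → Prop := fun x => R x ∧ ∀ a, ∀ᶠ z in p a, R (x * z)
  have hQ : ∀ᶠ x in p a0, Q x := by
    refine Filter.Eventually.and hb (Filter.eventually_all.mpr fun a => ?_)
    rw [← Ultrafilter.eventually_mul, hp']
    exact hb
  have hstep : ∀ x, Q x → ∀ a, ∀ᶠ z in p a, Q (x * z) := by
    intro x hx a
    refine Filter.Eventually.and (hx.2 a) (Filter.eventually_all.mpr fun b => ?_)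
    have := hx.2 a
    rw [← hp' a b, Ultrafilter.eventually_mul] at this
    simpa only [mul_assoc] using this
  refine ⟨b, {x | Q (FreeMonoid.ofList x)}, ?_, fun x hx => hx.1, ?_⟩
  · obtain ⟨x, hx⟩ := hQ.exists
    exact ⟨FreeMonoid.toList x, hx⟩
  · intro X hX hXQ
    have h1 : ∀ᶠ y in v, ∀ x ∈ X, ∀ a, Q (FreeMonoid.ofList x *
        FreeMonoid.map (fun o : Option A => o.getD a) y) := by
      rw [Filter.eventually_all_finite hX]
      intro x hx
      rw [Filter.eventually_all]
      intro a
      exact hstep _ (hXQ hx) a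
    obtain ⟨y, ⟨t, ht⟩, hy⟩ := (hv.and h1).exists
    refine ⟨t, fun x hx a => ?_⟩
    have := hy x hx a
    have e : FreeMonoid.ofList (x ++ sub a (none :: t)) = (FreeMonoid.ofList x *
        FreeMonoid.map (fun o : Option A => o.getD a) y) := by
      rw [FreeMonoid.ofList_append, ← ht]; rfl
    change Q (FreeMonoid.ofList _)
    rw [e]; exact this

/-- Iterated words. -/
def iterW {A : Type*} (w0 : List A) (y : ℕ → List (Option A)) (a : ℕ → A) : ℕ → List A
  | 0 => w0
  | m + 1 => iterW w0 y a m ++ sub (a m) (none :: y m)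

theorem carlson_simpson {A : Type*} [Finite A] [Nonempty A] (P : List A → Prop) :
    ∃ (b : Prop) (w0 : List A) (y : ℕ → List (Option A)), ∀ a m, (P (iterW w0 y a m) ↔ b) := by
  obtain ⟨b, Q, ⟨w0, hw0⟩, hQ, hstep⟩ := words_closed P
  let T := {X : Set (List A) // X.Finite ∧ X ⊆ Q}
  have hs : ∀ X : T, ∃ t : List (Option A), ∀ x ∈ X.1, ∀ a : A, x ++ sub a (none :: t) ∈ Q :=
    fun X => hstep X.1 X.2.1 X.2.2
  choose nx hnx using hs
  let next : T → T := fun X =>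
    ⟨⋃ a : A, (fun x => x ++ sub a (none :: nx X)) '' X.1,
      Set.finite_iUnion fun a => X.2.1.image _, by
        intro z hz
        rw [Set.mem_iUnion] at hz
        obtain ⟨a, x, hx, rfl⟩ := hz
        exact hnx X x hx a⟩
  let start : T := ⟨{w0}, Set.finite_singleton _, by simpa using hw0⟩
  let X : ℕ → T := fun m => next^[m] start
  refine ⟨b, w0, fun m => nx (X m), fun a m => ?_⟩
  have : iterW w0 (fun m => nx (X m)) a m ∈ (X m).1 := by
    induction m with
    | zero => exact Set.mem_singleton _
    | succ m ih =>
      have e : X (m+1) = next (X m) := Function.iterate_succ_apply' _ _ _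
      rw [e]
      exact Set.mem_iUnion.mpr ⟨a m, _, ih, rfl⟩
  exact hQ _ ((X m).2.2 this)

end Words

section Rigid

/-- Rigid surjections of the natural numbers. -/
@[ext] structure Rig where
  fn : ℕ → ℕ
  rigid : ∀ x, ∀ k < fn x, ∃ y < x, fn y = k
  surj : ∀ k, ∃ x, fn x = k

namespace Rig

theorem le_self (e : Rig) : ∀ x, e.fn x ≤ x := by
  intro x
  induction x using Nat.strong_induction_on with
  | _ x ih =>
    by_contra h
    push Not at h
    obtain ⟨y, hy, hyx⟩ := e.rigid x x h
    have := ih y hy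
    omega

instance : Mul Rig where
  mul e f :=
    { fn := fun x => e.fn (f.fn x)
      rigid := by
        intro x k hk
        obtain ⟨y, hy, rfl⟩ := e.rigid _ k hk
        obtain ⟨z, hz, rfl⟩ := f.rigid _ y hy
        exact ⟨z, hz, rfl⟩
      surj := by
        intro k
        obtain ⟨y, rfl⟩ := e.surj k
        obtain ⟨z, rfl⟩ := f.surj y
        exact ⟨z, rfl⟩ }

instance : One Rig where
  one :=
    { fn := fun x => x
      rigid := fun x k hk => ⟨k, hk, rfl⟩
      surj := fun k => ⟨k, rfl⟩ }

@[simp] theorem mul_fn (e f : Rig) (x : ℕ) : (e * f).fn x = e.fn (f.fn x) := rfl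
@[simp] theorem one_fn (x : ℕ) : (1 : Rig).fn x = x := rfl

instance : Monoid Rig where
  mul_assoc _ _ _ := rfl
  one_mul _ := rfl
  mul_one _ := rfl

/-- `Fx n e`: `e` fixes `0, ..., n`. -/
def Fx (n : ℕ) (e : Rig) : Prop := ∀ x ≤ n, e.fn x = x

theorem Fx.one {n : ℕ} : Fx n 1 := fun _ _ => rfl

theorem Fx.mul {n : ℕ} {e f : Rig} (he : Fx n e) (hf : Fx n f) : Fx n (e * f) := by
  intro x hx
  rw [mul_fn, hf x hx, he x hx]

theorem Fx.mono {m n : ℕ} {e : Rig} (he : Fx n e) (h : m ≤ n) : Fx m e :=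
  fun x hx => he x (hx.trans h)

theorem Fx.zero (e : Rig) : Fx 0 e := by
  intro x hx
  have := e.le_self x
  omega

/-- `Sh n e`: `e` is a shift from `n` on. -/
def Sh (n : ℕ) (e : Rig) : Prop := (∀ x, e.fn (n + x) = e.fn n + x) ∧ ∀ x < n, e.fn x < e.fn n

theorem first_occ (e : Rig) (j : ℕ) : ∃ n, e.fn n = j ∧ ∀ x < n, e.fn x < j := by
  classical
  refine ⟨Nat.find (e.surj j), Nat.find_spec (e.surj j), fun x hx => ?_⟩
  have h1 := Nat.find_min (e.surj j) hx
  by_contra h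
  obtain ⟨y, hy, hyj⟩ := e.rigid x j (by omega)
  exact Nat.find_min (e.surj j) (hy.trans hx) hyj

/-- Build an element with prescribed values below `n`, shifted afterwards. -/
theorem exists_sh (n j : ℕ) (u : ℕ → ℕ) (h1 : ∀ x < n, ∀ k < u x, ∃ y < x, u y = k)
    (h2 : ∀ x < n, u x < j) (h3 : ∀ k < j, ∃ x < n, u x = k) :
    ∃ e : Rig, Sh n e ∧ e.fn n = j ∧ ∀ x < n, e.fn x = u x := by
  refine ⟨⟨fun x => if x < n then u x else j + (x - n), ?_, ?_⟩, ⟨?_, ?_⟩, ?_, ?_⟩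
  · intro x k hk
    by_cases hx : x < n
    · simp only [hx, if_true] at hk
      obtain ⟨y, hy, e⟩ := h1 x hx k hk
      refine ⟨y, hy, ?_⟩
      rw [if_pos (hy.trans hx), e]
    · simp only [hx, if_false] at hk
      by_cases hkj : k < j
      · obtain ⟨y, hy, e⟩ := h3 k hkj
        refine ⟨y, by omega, ?_⟩
        rw [if_pos hy, e]
      · refine ⟨n + (k - j), by omega, ?_⟩
        rw [if_neg (by omega)]
        omega
  · intro k
    by_cases hkj : k < j
    · obtain ⟨y, hy, e⟩ := h3 k hkj
      refine ⟨y, ?_⟩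
      rw [if_pos hy, e]
    · refine ⟨n + (k - j), ?_⟩
      rw [if_neg (by omega)]
      omega
  · intro x
    simp
  · intro x hx
    simp only [hx, if_true, lt_irrefl, if_false]
    have := h2 x hx
    omega
  · simp
  · intro x hx
    simp [hx]

/-- Factorisation through a shift. -/
theorem factor {n : ℕ} {s e : Rig} (hs : Sh n s) (h : ∀ x ≤ n, e.fn x = s.fn x) :
    ∃ e' : Rig, Fx (s.fn n) e' ∧ e = e' * s := by
  set j := s.fn n with hj
  have hlow : ∀ k < j, ∃ x < n, e.fn x = k := by
    intro k hk
    obtain ⟨y, hy, hyk⟩ := s.rigid n k hk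
    exact ⟨y, hy, by rw [h y hy.le, hyk]⟩
  have key : ∀ x, (if s.fn x < j then s.fn x else e.fn (n + (s.fn x - j))) = e.fn x := by
    intro x
    by_cases hx : x < n
    · rw [if_pos (hs.2 x hx), h x hx.le]
    · obtain ⟨d, rfl⟩ := Nat.exists_eq_add_of_le (not_lt.mp hx)
      rw [hs.1 d, if_neg (by omega)]
      congr 1
      omega
  refine ⟨⟨fun i => if i < j then i else e.fn (n + (i - j)), ?_, ?_⟩, ?_, ?_⟩
  · intro x k hk
    by_cases hx : x < j
    · rw [if_pos hx] at hk
      exact ⟨k, hk, by rw [if_pos (by omega)]⟩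
    · rw [if_neg hx] at hk
      by_cases hkj : k < j
      · exact ⟨k, by omega, by rw [if_pos hkj]⟩
      · obtain ⟨y, hy, hyk⟩ := e.rigid _ k hk
        have hyn : n ≤ y := by
          by_contra hc
          push Not at hc
          have := hs.2 y hc
          rw [← h y hc.le] at this
          omega
        refine ⟨j + (y - n), by omega, ?_⟩
        rw [if_neg (by omega), ← hyk]
        congr 1
        omega
  · intro k
    obtain ⟨x, hx⟩ := e.surj k
    exact ⟨s.fn x, by rw [key x, hx]⟩
  · intro x hx
    change (if x < j then x else e.fn (n + (x - j))) = x
    split_ifs with hxj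
    · rfl
    · have : x = j := by omega
      subst this
      simp [h n le_rfl, ← hj]
  · ext x
    exact (key x).symm

theorem factor_at (e : Rig) (j : ℕ) :
    ∃ n, j ≤ n ∧ ∃ s e' : Rig, Sh n s ∧ s.fn n = j ∧ Fx j e' ∧ e = e' * s := by
  obtain ⟨n, hn, hlt⟩ := e.first_occ j
  obtain ⟨s, hs, hsn, hsx⟩ := exists_sh n j e.fn (fun x _ => e.rigid x) hlt
    (fun k hk => e.rigid n k (by omega))
  obtain ⟨e', he', h⟩ := factor (e := e) hs (fun x hx => by
    rcases hx.lt_or_eq with hx | rfl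
    · exact (hsx x hx).symm
    · rw [hn, hsn])
  refine ⟨n, ?_, s, e', hs, hsn, hsn ▸ he', h⟩
  have := e.le_self n
  omega

theorem swap {n : ℕ} {s h : Rig} (hs : Sh n s) (hh : Fx n h) :
    ∃ h' : Rig, Fx (s.fn n) h' ∧ s * h = h' * s :=
  factor hs (fun x hx => by rw [mul_fn, hh x hx])

theorem lift {n : ℕ} {s h' : Rig} (hs : Sh n s) (hh : Fx (s.fn n) h') :
    ∃ h : Rig, Fx n h ∧ s * h = h' * s := by
  set j := s.fn n with hj
  have hsec : ∀ i < j, ∃ y < n, s.fn y = i := fun i hi => s.rigid n i hi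
  choose! r hr1 hr2 using hsec
  have hgen : ∀ i, s.fn (n + (i - j)) = j + (i - j) := fun i => hs.1 _
  have key : ∀ x, s.fn (if x < n then x else
      if h'.fn (s.fn x) < j then r (h'.fn (s.fn x)) else n + (h'.fn (s.fn x) - j)) =
      h'.fn (s.fn x) := by
    intro x
    split_ifs with h1 h2
    · rw [hh _ (hs.2 x h1).le]
    · exact hr2 _ h2
    · rw [hgen]; omega
  refine ⟨⟨fun x => if x < n then x else
      if h'.fn (s.fn x) < j then r (h'.fn (s.fn x)) else n + (h'.fn (s.fn x) - j), ?_, ?_⟩, ?_, ?_⟩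
  · intro x k hk
    by_cases hkn : k < n
    · by_cases hxn : x < n
      · rw [if_pos hxn] at hk
        exact ⟨k, hk, by rw [if_pos hkn]⟩
      · exact ⟨k, by omega, by rw [if_pos hkn]⟩
    · have hxn : ¬ x < n := by
        intro hc
        rw [if_pos hc] at hk
        omega
      rw [if_neg hxn] at hk
      have h2 : ¬ h'.fn (s.fn x) < j := by
        intro hc
        rw [if_pos hc] at hk
        have := hr1 _ hc
        omega
      rw [if_neg h2] at hk
      obtain ⟨y, hy, hyk⟩ := (h' * s).rigid x (j + (k - n)) (by rw [mul_fn]; omega)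
      rw [mul_fn] at hyk
      refine ⟨y, hy, ?_⟩
      have hyn : ¬ y < n := by
        intro hc
        have := hs.2 y hc
        rw [hh _ this.le] at hyk
        omega
      rw [if_neg hyn, hyk, if_neg (by omega)]
      omega
  · intro k
    by_cases hkn : k < n
    · exact ⟨k, by rw [if_pos hkn]⟩
    · obtain ⟨y, hyk⟩ := (h' * s).surj (j + (k - n))
      rw [mul_fn] at hyk
      refine ⟨y, ?_⟩
      have hyn : ¬ y < n := by
        intro hc
        have := hs.2 y hc
        rw [hh _ this.le] at hyk
        omega
      rw [if_neg hyn, hyk, if_neg (by omega)]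
      omega
  · intro x hx
    change (if x < n then x else
      if h'.fn (s.fn x) < j then r (h'.fn (s.fn x)) else n + (h'.fn (s.fn x) - j)) = x
    split_ifs with h1 h2
    · rfl
    · have : x = n := by omega
      subst this
      rw [hh _ le_rfl] at h2
      omega
    · have : x = n := by omega
      subst this
      rw [hh _ le_rfl]
      omega
  · ext x
    exact key x

theorem finite_sh (n : ℕ) : {s : Rig | Sh n s}.Finite := by
  refine Set.Finite.of_injOn (f := fun (s : Rig) (i : Fin (n + 1)) => s.fn i)
    (t := {u | ∀ i, u i ∈ Set.Iic n}) ?_ ?_ (Set.Finite.pi' fun _ => Set.finite_Iic n)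
  · intro s _ i
    have := s.le_self i
    have := i.2
    simp only [Set.mem_Iic]
    omega
  · intro s hs t ht hst
    have h : ∀ x ≤ n, s.fn x = t.fn x := fun x hx => congrFun hst ⟨x, by omega⟩
    ext x
    by_cases hx : x ≤ n
    · exact h x hx
    · obtain ⟨d, rfl⟩ := Nat.exists_eq_add_of_le (not_le.mp hx).le
      rw [hs.1, ht.1, h n le_rfl]

/-- Infinite left-composition. -/
def tailProd (h : ℕ → Rig) (n : ℕ) : ℕ → Rig
  | 0 => 1
  | m + 1 => h (n + m) * tailProd h n m

theorem tailProd_succ (h : ℕ → Rig) (n m : ℕ) :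
    tailProd h n (m + 1) = tailProd h (n + 1) m * h n := by
  induction m with
  | zero => rfl
  | succ m ih =>
    rw [tailProd, ih]
    have : n + (m + 1) = n + 1 + m := by omega
    rw [this, ← mul_assoc]
    rfl

theorem exists_limit (k : ℕ) (h : ℕ → Rig) (hh : ∀ n, Fx (k + n) (h n)) :
    ∃ T : ℕ → Rig, (∀ n, Fx (k + n) (T n)) ∧ ∀ n, T n = T (n + 1) * h n := by
  -- values stay fixed once they are small
  have stab : ∀ n m y, (tailProd h n m).fn y ≤ m → ∀ d,
      (tailProd h n (m + d)).fn y = (tailProd h n m).fn y := by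
    intro n m y hy d
    induction d with
    | zero => rfl
    | succ d ih =>
      change (h (n + (m + d)) * tailProd h n (m + d)).fn y = _
      rw [mul_fn, ih]
      exact hh _ _ (by omega)
  have stab2 : ∀ n x m, x ≤ m → (tailProd h n m).fn x = (tailProd h n x).fn x := by
    intro n x m hm
    obtain ⟨d, rfl⟩ := Nat.exists_eq_add_of_le hm
    exact stab n x x (le_self _ _) d
  have hfx : ∀ n m, Fx (k + n) (tailProd h n m) := by
    intro n m
    induction m with
    | zero => exact Fx.one
    | succ m ih => exact ((hh (n + m)).mono (by omega)).mul ih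
  refine ⟨fun n => ⟨fun x => (tailProd h n x).fn x, ?_, ?_⟩, ?_, ?_⟩
  · intro x i hi
    obtain ⟨y, hy, e⟩ := (tailProd h n x).rigid x i hi
    exact ⟨y, hy, by rw [← stab2 n y x hy.le, e]⟩
  · intro i
    obtain ⟨y, hy⟩ := (tailProd h n i).surj i
    refine ⟨y, ?_⟩
    rw [← stab2 n y (i + y) (by omega), stab n i y hy.le, hy]
  · intro n x hx
    exact hfx n x x hx
  · intro n
    ext x
    change (tailProd h n x).fn x = (tailProd h (n + 1) ((h n).fn x)).fn ((h n).fn x)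
    rw [← stab2 n x (x + 1) (by omega), ← stab2 (n + 1) _ x ((h n).le_self x), tailProd_succ]
    rfl

/-- The fusion lemma. -/
theorem fusion (D : ℕ → Rig → Prop) (hered : ∀ k g h, Fx k h → D k g → D k (h * g))
    (dense : ∀ k g, ∃ h, Fx k h ∧ D k (h * g)) (k : ℕ) (f : Rig) :
    ∃ h, Fx k h ∧ ∀ e j, k ≤ j → D j (e * (h * f)) := by
  let D' : ℕ → Rig → Prop := fun n g => ∀ s, Sh n s → D (s.fn n) (s * g)
  have hered' : ∀ n s, Sh n s → ∀ g h, Fx n h → D (s.fn n) (s * g) →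
      D (s.fn n) (s * (h * g)) := by
    intro n s hs g h hh hD
    obtain ⟨h', hf, e⟩ := swap hs hh
    rw [← mul_assoc, e, mul_assoc]
    exact hered _ _ _ hf hD
  have dense' : ∀ n g, ∃ h, Fx n h ∧ D' n (h * g) := by
    intro n g
    have : ∀ S : Set Rig, S.Finite → S ⊆ {s | Sh n s} →
        ∃ h, Fx n h ∧ ∀ s ∈ S, D (s.fn n) (s * (h * g)) := by
      intro S hS
      induction S, hS using Set.Finite.induction_on with
      | empty => intro _; exact ⟨1, Fx.one, by simp⟩
      | @insert a S _ _ ih =>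
        intro hsub
        obtain ⟨h, hh, hD⟩ := ih ((Set.subset_insert _ _).trans hsub)
        have ha : Sh n a := hsub (Set.mem_insert _ _)
        obtain ⟨h1, hh1, hD1⟩ := dense (a.fn n) (a * (h * g))
        obtain ⟨h2, hh2, e⟩ := lift ha hh1
        refine ⟨h2 * h, hh2.mul hh, ?_⟩
        intro s hs
        rcases hs with rfl | hs
        · rw [mul_assoc, ← mul_assoc s, e, mul_assoc]
          exact hD1
        · rw [mul_assoc]
          exact hered' n s (hsub (Set.mem_insert_of_mem _ hs)) _ _ hh2 (hD s hs)
    obtain ⟨h, hh, hD⟩ := this _ (finite_sh n) subset_rfl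
    exact ⟨h, hh, fun s hs => hD s hs⟩
  choose nx hnx1 hnx2 using dense'
  let F : ℕ → Rig := fun n => Nat.rec f (fun n g => nx (k + n) g * g) n
  have hF : ∀ n, F (n + 1) = nx (k + n) (F n) * F n := fun n => rfl
  obtain ⟨T, hT, hTs⟩ := exists_limit k (fun n => nx (k + n) (F n)) (fun n => hnx1 _ _)
  have hall : ∀ n, T 0 * f = T n * F n := by
    intro n
    induction n with
    | zero => rfl
    | succ n ih => rw [ih, hTs n, hF, mul_assoc]
  refine ⟨T 0, by simpa using hT 0, ?_⟩
  intro e j hj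
  obtain ⟨n, hn, s, e', hs, hsn, he', rfl⟩ := factor_at e j
  rw [mul_assoc]
  apply hered _ _ _ he'
  obtain ⟨d, rfl⟩ := Nat.exists_eq_add_of_le (hj.trans hn)
  rw [hall (d + 1)]
  have := hered' (k + d) s hs (F (d + 1)) (T (d + 1)) ((hT (d + 1)).mono (by omega))
    (hnx2 (k + d) (F d) s hs)
  rwa [hsn] at this

/-- The pigeonhole lemma. -/
theorem pigeon (j : ℕ) (Q : Rig → Prop) (hQ : ∀ e e', Fx (j + 1) e' → (Q (e' * e) ↔ Q e)) :
    ∃ h, Fx j h ∧ ∃ b : Prop, ∀ e, Fx j e → (Q (e * h) ↔ b) := by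
  -- the element associated with a word
  have hword : ∀ w : List (Fin (j + 1)), ∃ s : Rig, Sh (j + 1 + w.length) s ∧
      s.fn (j + 1 + w.length) = j + 1 ∧ (∀ x ≤ j, s.fn x = x) ∧
      ∀ i (hi : i < w.length), s.fn (j + 1 + i) = (w[i] : ℕ) := by
    intro w
    obtain ⟨s, hs, hsn, hsx⟩ := exists_sh (j + 1 + w.length) (j + 1)
      (fun x => if x ≤ j then x else ((w.map Fin.val).getD (x - (j + 1)) 0)) (by
        intro x hx k hk
        by_cases hxj : x ≤ j
        · rw [if_pos hxj] at hk
          exact ⟨k, hk, by rw [if_pos (by omega)]⟩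
        · rw [if_neg hxj] at hk
          have hlt : x - (j + 1) < w.length := by omega
          rw [List.getD_eq_getElem _ _ (by simpa using hlt)] at hk
          simp only [List.getElem_map] at hk
          have := (w[x - (j + 1)]).2
          exact ⟨k, by omega, by rw [if_pos (by omega)]⟩) (by
        intro x hx
        by_cases hxj : x ≤ j
        · rw [if_pos hxj]; omega
        · rw [if_neg hxj]
          have hlt : x - (j + 1) < w.length := by omega
          rw [List.getD_eq_getElem _ _ (by simpa using hlt)]
          simp only [List.getElem_map]
          exact (w[x - (j + 1)]).2) (by
        intro k hk
        exact ⟨k, by omega, by rw [if_pos (by omega)]⟩)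
    refine ⟨s, hs, hsn, ?_, ?_⟩
    · intro x hx
      rw [hsx x (by omega), if_pos hx]
    · intro i hi
      rw [hsx _ (by omega), if_neg (by omega)]
      have : j + 1 + i - (j + 1) = i := by omega
      rw [this, List.getD_eq_getElem _ _ (by simpa using hi)]
      simp
  choose ew hew1 hew2 hew3 hew4 using hword
  obtain ⟨b, w0, y, hcs⟩ := carlson_simpson (fun w => Q (ew w))
  let U : ℕ → List ℕ := fun m => Nat.rec (w0.map Fin.val)
    (fun m l => l ++ (none :: y m).map (fun o => o.elim (j + 1 + m) Fin.val)) m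
  have hU : ∀ m, U (m + 1) = U m ++ (none :: y m).map (fun o => o.elim (j + 1 + m) Fin.val) :=
    fun m => rfl
  have hlen1 : ∀ m, (U m).length < (U (m + 1)).length := by
    intro m; rw [hU]; simp
  have hlenmono : StrictMono fun m => (U m).length := strictMono_nat_of_lt_succ hlen1
  have hlen : ∀ m, m ≤ (U m).length := fun _ => hlenmono.le_apply
  have hpre : ∀ m d, U m <+: U (m + d) := by
    intro m d
    induction d with
    | zero => exact List.prefix_rfl
    | succ d ih => exact ih.trans ⟨_, (hU (m + d)).symm⟩
  let u : ℕ → ℕ := fun i => (U (i + 1)).getD i 0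
  have hu : ∀ m i (hi : i < (U m).length), u i = (U m)[i] := by
    intro m i hi
    have hi' : i < (U (i + 1)).length := hlen (i + 1)
    change (U (i + 1)).getD i 0 = _
    rw [List.getD_eq_getElem _ _ hi']
    rcases le_total m (i + 1) with h | h
    · obtain ⟨d, hd⟩ := Nat.exists_eq_add_of_le h
      have := hpre m d
      rw [← hd] at this
      exact (this.getElem hi).symm
    · obtain ⟨d, rfl⟩ := Nat.exists_eq_add_of_le h
      exact (hpre (i + 1) d).getElem hi'
  have hub : ∀ m, ∀ z ∈ U m, z < j + 1 + m := by
    intro m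
    induction m with
    | zero =>
      intro z hz
      obtain ⟨a, _, rfl⟩ := List.mem_map.mp hz
      exact a.2
    | succ m ih =>
      intro z hz
      rw [hU, List.mem_append] at hz
      rcases hz with hz | hz
      · have := ih z hz; omega
      · obtain ⟨o, _, rfl⟩ := List.mem_map.mp hz
        cases o with
        | none => simp
        | some a =>
          have := a.2
          simp only [Option.elim]
          omega
  have hvar : ∀ m, u ((U m).length) = j + 1 + m := by
    intro m
    rw [hu (m + 1) _ (hlen1 m)]
    simp [hU]
  have hge : ∀ m i, u i = j + 1 + m → (U m).length ≤ i := by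
    intro m i hi
    by_contra hc
    push Not at hc
    rw [hu m i hc] at hi
    have := hub m _ (List.getElem_mem hc)
    omega
  let h : Rig := ⟨fun x => if x ≤ j then x else u (x - (j + 1)), by
      intro x k hk
      by_cases hxj : x ≤ j
      · rw [if_pos hxj] at hk
        exact ⟨k, hk, by rw [if_pos (by omega)]⟩
      · rw [if_neg hxj] at hk
        by_cases hkj : k ≤ j
        · exact ⟨k, by omega, by rw [if_pos hkj]⟩
        · have h1 := hge (u (x - (j + 1)) - (j + 1)) (x - (j + 1)) (by omega)
          have h2 : (U (k - (j + 1))).length < (U (u (x - (j + 1)) - (j + 1))).length :=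
            hlenmono (by omega)
          refine ⟨j + 1 + (U (k - (j + 1))).length, by omega, ?_⟩
          rw [if_neg (by omega), Nat.add_sub_cancel_left, hvar]
          omega, by
      intro k
      by_cases hkj : k ≤ j
      · exact ⟨k, by rw [if_pos hkj]⟩
      · refine ⟨j + 1 + (U (k - (j + 1))).length, ?_⟩
        rw [if_neg (by omega), Nat.add_sub_cancel_left, hvar]
        omega⟩
  have hlow : ∀ x ≤ j, h.fn x = x := fun x hx => if_pos hx
  have hhigh : ∀ i, h.fn (j + 1 + i) = u i := by
    intro i
    change (if j + 1 + i ≤ j then j + 1 + i else u (j + 1 + i - (j + 1))) = u i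
    rw [if_neg (by omega), Nat.add_sub_cancel_left]
  refine ⟨h, hlow, b, ?_⟩
  intro e he
  obtain ⟨n, hn, hlt⟩ := e.first_occ (j + 1)
  have hnj : j + 1 ≤ n := by
    by_contra hc
    have := he n (by omega)
    omega
  obtain ⟨m, rfl⟩ := Nat.exists_eq_add_of_le hnj
  let a : ℕ → Fin (j + 1) := fun i =>
    if hi : i < m then ⟨e.fn (j + 1 + i), hlt _ (by omega)⟩ else 0
  have hW : ∀ m' ≤ m, (U m').map e.fn = (iterW w0 y a m').map Fin.val := by
    intro m' hm'
    induction m' with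
    | zero =>
      change (w0.map Fin.val).map e.fn = w0.map Fin.val
      rw [List.map_map]
      apply List.map_congr_left
      intro z _
      exact he _ (by have := z.2; omega)
    | succ m' ih =>
      rw [hU, List.map_append, ih (by omega), iterW, List.map_append, sub, List.map_map,
        List.map_map]
      congr 1
      apply List.map_congr_left
      intro o _
      cases o with
      | none =>
        simp only [Function.comp, Option.elim, Option.getD]
        have : a m' = ⟨e.fn (j + 1 + m'), hlt _ (by omega)⟩ := by
          change dite _ _ _ = _
          rw [dif_pos (by omega)]
        rw [this]
      | some z => exact he (z : ℕ) (by have := z.2; omega)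
  have hWm := hW m le_rfl
  have hWl : (U m).length = (iterW w0 y a m).length := by
    have := congrArg List.length hWm
    simpa using this
  obtain ⟨e', he', heq⟩ := factor (s := ew (iterW w0 y a m)) (e := e * h) (hew1 _) (by
    intro x hx
    rw [mul_fn]
    by_cases hxj : x ≤ j
    · rw [hlow x hxj, hew3 _ x hxj, he x hxj]
    · obtain ⟨i, rfl⟩ := Nat.exists_eq_add_of_le (show j + 1 ≤ x by omega)
      rw [hhigh]
      by_cases hi : i < (iterW w0 y a m).length
      · rw [hew4 _ i hi, hu m i (by omega)]
        have h1 : ((U m).map e.fn)[i]'(by simpa using (by omega : i < (U m).length)) =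
          ((iterW w0 y a m).map Fin.val)[i]'(by simpa using hi) := by
          simp only [hWm]
        simpa using h1
      · have : i = (iterW w0 y a m).length := by omega
        subst this
        rw [hew2, ← hWl, hvar, hn])
  rw [hew2] at he'
  rw [heq, hQ _ _ he']
  exact hcs a m

end Rig
end Rigid

section Ramsey
open Rig

/-- The basic neighbourhood `[r_k(g), g]`. -/
def Nb (k : ℕ) (g : Rig) : Set Rig := {x | ∃ h, Fx k h ∧ x = h * g}

theorem Nb.self (k : ℕ) (g : Rig) : g ∈ Nb k g := ⟨1, Fx.one, rfl⟩

theorem Nb.sub {k : ℕ} {g h : Rig} (hh : Fx k h) : Nb k (h * g) ⊆ Nb k g := by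
  rintro _ ⟨e, he, rfl⟩
  exact ⟨e * h, he.mul hh, rfl⟩

theorem Nb.anti {k n : ℕ} (h : k ≤ n) (g : Rig) : Nb n g ⊆ Nb k g := by
  rintro _ ⟨e, he, rfl⟩
  exact ⟨e, he.mono h, rfl⟩

/-- Ramsey sets of rigid surjections. -/
def Rams (X : Set Rig) : Prop :=
  ∀ k f, ∃ h, Fx k h ∧ (Nb k (h * f) ⊆ X ∨ ∀ x ∈ Nb k (h * f), x ∉ X)

/-- Ramsey null sets. -/
def RNull (X : Set Rig) : Prop :=
  ∀ k f, ∃ h, Fx k h ∧ ∀ x ∈ Nb k (h * f), x ∉ X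

/-- Open sets. -/
def ROpen (O : Set Rig) : Prop := ∀ g ∈ O, ∃ n, Nb n g ⊆ O

theorem ROpen.rams {O : Set Rig} (hO : ROpen O) : Rams O := by
  let acc : ℕ → Rig → Prop := fun j g => Nb j g ⊆ O
  let rej : ℕ → Rig → Prop := fun j g => ∀ h, Fx j h → ¬ acc j (h * g)
  have acc_h : ∀ k g h, Fx k h → acc k g → acc k (h * g) :=
    fun k g h hh ha => (Nb.sub hh).trans ha
  have rej_h : ∀ k g h, Fx k h → rej k g → rej k (h * g) := by
    intro k g h hh hr h' hh'
    rw [← mul_assoc]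
    exact hr _ (hh'.mul hh)
  have rej_acc : ∀ k g, rej k g → ¬ acc k g := fun k g hr => hr 1 Fx.one
  have fus1 := fusion (fun k g => acc k g ∨ rej k g)
    (fun k g h hh hD => hD.imp (acc_h k g h hh) (rej_h k g h hh))
    (fun k g => by
      by_cases hc : ∃ h, Fx k h ∧ acc k (h * g)
      · obtain ⟨h, hh, ha⟩ := hc
        exact ⟨h, hh, Or.inl ha⟩
      · push Not at hc
        exact ⟨1, Fx.one, Or.inr hc⟩)
  have fus2 := fusion (fun j g => acc j g ∨ (rej j g ∧ ∀ e, Fx j e → rej (j + 1) (e * g)))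
    (fun k g h hh hD => by
      rcases hD with hD | ⟨hD, hE⟩
      · exact Or.inl (acc_h k g h hh hD)
      · refine Or.inr ⟨rej_h k g h hh hD, fun e he => ?_⟩
        rw [← mul_assoc]
        exact hE _ (he.mul hh))
    (fun j g => by
      obtain ⟨h1, hh1, hD⟩ := fus1 j g
      obtain ⟨h2, hh2, b, hb⟩ := pigeon j (fun e => acc (j + 1) (e * (h1 * g))) (by
        intro e e' he'
        constructor
        · intro ha
          rcases hD e (j + 1) (by omega) with hx | hx
          · exact hx
          · rw [mul_assoc] at ha
            exact absurd ha (hx e' he')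
        · intro ha
          rw [mul_assoc]
          exact acc_h _ _ _ he' ha)
      refine ⟨h2 * h1, hh2.mul hh1, ?_⟩
      rw [mul_assoc]
      by_cases hbt : b
      · left
        rintro _ ⟨e, he, rfl⟩
        have := (hb e he).mpr hbt
        rw [mul_assoc] at this
        exact this (Nb.self _ _)
      · rcases hD h2 j le_rfl with hx | hx
        · exact Or.inl hx
        · right
          refine ⟨hx, fun e he => ?_⟩
          have := mt (hb e he).mp hbt
          have h3 := (hD (e * h2) (j + 1) (by omega)).resolve_left this
          rwa [mul_assoc] at h3)
  intro k f
  obtain ⟨h, hh, hD⟩ := fus2 k f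
  refine ⟨h, hh, ?_⟩
  rcases hD 1 k le_rfl with h0 | ⟨h0, -⟩
  · exact Or.inl h0
  · right
    rintro _ ⟨e, he, rfl⟩ hx
    have hr : ∀ d, rej (k + d) (e * (h * f)) := by
      intro d
      induction d with
      | zero => exact rej_h _ _ _ he h0
      | succ d ih =>
        rcases hD e (k + d) (by omega) with h1 | ⟨_, h2⟩
        · exact absurd h1 (rej_acc _ _ ih)
        · exact h2 1 Fx.one
    obtain ⟨n, hn⟩ := hO _ hx
    exact rej_acc _ _ (hr n) ((Nb.anti (by omega) _).trans hn)

theorem RNull.iUnion {N : ℕ → Set Rig} (hN : ∀ i, RNull (N i)) : RNull (⋃ i, N i) := by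
  have fus := fusion (fun k g => ∀ i < k + 1, ∀ x ∈ Nb k g, x ∉ N i)
    (fun k g h hh hD i hi x hx => hD i hi x (Nb.sub hh hx))
    (fun k g => by
      have : ∀ n, ∃ h, Fx k h ∧ ∀ i < n, ∀ x ∈ Nb k (h * g), x ∉ N i := by
        intro n
        induction n with
        | zero => exact ⟨1, Fx.one, by simp⟩
        | succ n ih =>
          obtain ⟨h, hh, hx⟩ := ih
          obtain ⟨h2, hh2, hx2⟩ := hN n k (h * g)
          refine ⟨h2 * h, hh2.mul hh, ?_⟩
          intro i hi x hxm
          rw [mul_assoc] at hxm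
          rcases Nat.lt_succ_iff_lt_or_eq.mp hi with hi | rfl
          · exact hx i hi x (Nb.sub hh2 hxm)
          · exact hx2 x hxm
      exact this (k + 1))
  intro k f
  obtain ⟨h, hh, hD⟩ := fus k f
  refine ⟨h, hh, ?_⟩
  rintro _ ⟨e, he, rfl⟩ hx
  obtain ⟨i, hi⟩ := Set.mem_iUnion.mp hx
  exact hD e (k + i) (by omega) i (by omega) _ (Nb.self _ _) hi

theorem RNull.mono {X Y : Set Rig} (hY : RNull Y) (h : X ⊆ Y) : RNull X := by
  intro k f
  obtain ⟨e, he, hx⟩ := hY k f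
  exact ⟨e, he, fun x hxm hc => hx x hxm (h hc)⟩

theorem RNull.iUnion' {ι : Type*} [Countable ι] {N : ι → Set Rig} (hN : ∀ i, RNull (N i)) :
    RNull (⋃ i, N i) := by
  cases isEmpty_or_nonempty ι with
  | inl h =>
    intro k f
    exact ⟨1, Fx.one, fun x _ hc => by simp at hc⟩
  | inr h =>
    obtain ⟨g, hg⟩ := exists_surjective_nat ι
    rw [← hg.iUnion_comp]
    exact RNull.iUnion fun i => hN (g i)

theorem Rams.compl {X : Set Rig} (hX : Rams X) : Rams Xᶜ := by
  intro k f
  obtain ⟨h, hh, hx⟩ := hX k f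
  refine ⟨h, hh, ?_⟩
  rcases hx with hx | hx
  · exact Or.inr fun x hxm hc => hc (hx hxm)
  · exact Or.inl fun x hxm => hx x hxm

/-- Ramsey modulo null. -/
theorem Rams.of_null {X Y N : Set Rig} (hX : Rams X) (hN : RNull N)
    (h : ∀ x, x ∉ N → (x ∈ Y ↔ x ∈ X)) : Rams Y := by
  intro k f
  obtain ⟨h1, hh1, hx1⟩ := hN k f
  obtain ⟨h2, hh2, hx2⟩ := hX k (h1 * f)
  refine ⟨h2 * h1, hh2.mul hh1, ?_⟩
  rw [mul_assoc]
  have hout : ∀ x ∈ Nb k (h2 * (h1 * f)), x ∉ N := fun x hx => hx1 x (Nb.sub hh2 hx)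
  rcases hx2 with hx2 | hx2
  · exact Or.inl fun x hx => (h x (hout x hx)).mpr (hx2 hx)
  · exact Or.inr fun x hx hc => hx2 x hx ((h x (hout x hx)).mp hc)

/-- The interior of a set. -/
def rint (X : Set Rig) : Set Rig := {g | ∃ n, Nb n g ⊆ X}

theorem rint_open (X : Set Rig) : ROpen (rint X) := by
  rintro g ⟨n, hn⟩
  refine ⟨n, ?_⟩
  rintro _ ⟨h, hh, rfl⟩
  exact ⟨n, (Nb.sub hh).trans hn⟩

theorem rint_sub (X : Set Rig) : rint X ⊆ X := by
  rintro g ⟨n, hn⟩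
  exact hn (Nb.self _ _)

theorem Rams.diff_rint {X : Set Rig} (hX : Rams X) : RNull (X \ rint X) := by
  intro k f
  obtain ⟨h, hh, hx⟩ := hX k f
  refine ⟨h, hh, ?_⟩
  rcases hx with hx | hx
  · rintro _ ⟨e, he, rfl⟩ hc
    exact hc.2 ⟨k, (Nb.sub he).trans hx⟩
  · exact fun x hxm hc => hx x hxm hc.1

theorem Rams.iUnion {ι : Type*} [Countable ι] {X : ι → Set Rig} (hX : ∀ i, Rams (X i)) :
    Rams (⋃ i, X i) := by
  have hop : ROpen (⋃ i, rint (X i)) := by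
    intro g hg
    obtain ⟨i, hi⟩ := Set.mem_iUnion.mp hg
    obtain ⟨n, hn⟩ := rint_open _ g hi
    exact ⟨n, hn.trans (Set.subset_iUnion (fun i => rint (X i)) i)⟩
  refine Rams.of_null hop.rams (RNull.iUnion' fun i => (hX i).diff_rint) ?_
  intro x hx
  simp only [Set.mem_iUnion, not_exists] at hx ⊢
  constructor
  · rintro ⟨i, hi⟩
    refine ⟨i, ?_⟩
    by_contra hc
    exact hx i ⟨hi, hc⟩
  · rintro ⟨i, hi⟩
    exact ⟨i, rint_sub _ hi⟩

theorem Rams.union {X Y : Set Rig} (hX : Rams X) (hY : Rams Y) : Rams (X ∪ Y) := by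
  rw [Set.union_eq_iUnion]
  exact Rams.iUnion fun b => by cases b <;> assumption

theorem Rams.diff {X Y : Set Rig} (hX : Rams X) (hY : Rams Y) : Rams (X \ Y) := by
  have := (hX.compl.union hY).compl
  rwa [Set.compl_union, compl_compl, ← Set.sdiff_eq] at this

theorem Rams.souslin {A : List ℕ → Set Rig} (hA : ∀ s, Rams (A s)) : Rams (souslinOp A) := by
  let B : List ℕ → Set Rig := fun s =>
    {g | ∃ x : ℕ → ℕ, (List.range s.length).map x = s ∧ ∀ n, g ∈ A ((List.range n).map x)}
  let H : List ℕ → Set Rig := fun s => A s \ rint (B s)ᶜ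
  have hH : ∀ s, Rams (H s) := fun s => (hA s).diff (rint_open _).rams
  have hBH : ∀ s, B s ⊆ H s := by
    rintro s g ⟨x, hx, hg⟩
    refine ⟨?_, fun hc => rint_sub _ hc ⟨x, hx, hg⟩⟩
    have := hg s.length
    rwa [hx] at this
  have hBs : ∀ s, B s ⊆ ⋃ k : ℕ, B (s ++ [k]) := by
    rintro s g ⟨x, hx, hg⟩
    refine Set.mem_iUnion.mpr ⟨x s.length, x, ?_, hg⟩
    rw [List.length_append, List.length_singleton, List.range_succ, List.map_append, hx]
    rfl
  have hB0 : B [] = souslinOp A := by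
    ext g
    constructor
    · rintro ⟨x, -, hg⟩
      exact Set.mem_iUnion.mpr ⟨x, Set.mem_iInter.mpr hg⟩
    · intro hg
      obtain ⟨x, hx⟩ := Set.mem_iUnion.mp hg
      exact ⟨x, rfl, fun n => Set.mem_iInter.mp hx n⟩
  let N : List ℕ → Set Rig := fun s => H s \ ⋃ k : ℕ, H (s ++ [k])
  have hN : ∀ s, RNull (N s) := by
    intro s k f
    have hr : Rams (N s) := (hH s).diff (Rams.iUnion fun k => hH _)
    obtain ⟨h, hh, hx⟩ := hr k f
    refine ⟨h, hh, ?_⟩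
    rcases hx with hx | hx
    · exfalso
      have h1 : Nb k (h * f) ⊆ (B s)ᶜ := by
        intro g hg hgB
        obtain ⟨i, hi⟩ := Set.mem_iUnion.mp (hBs s hgB)
        exact (hx hg).2 (Set.mem_iUnion.mpr ⟨i, hBH _ hi⟩)
      exact (hx (Nb.self _ _)).1.2 ⟨k, h1⟩
    · exact hx
  refine Rams.of_null (hH []) (RNull.iUnion' hN) ?_
  intro g hg
  rw [← hB0]
  refine ⟨fun h => hBH _ h, fun h0 => ?_⟩
  rw [hB0]
  have hstep : ∀ s, ∃ k : ℕ, g ∈ H s → g ∈ H (s ++ [k]) := by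
    intro s
    by_cases hs : g ∈ H s
    · have h1 : g ∉ N s := fun hc => hg (Set.mem_iUnion.mpr ⟨s, hc⟩)
      have h2 : g ∈ ⋃ k : ℕ, H (s ++ [k]) := by
        by_contra hc
        exact h1 ⟨hs, hc⟩
      obtain ⟨k, hk⟩ := Set.mem_iUnion.mp h2
      exact ⟨k, fun _ => hk⟩
    · exact ⟨0, fun h => absurd h hs⟩
  choose nx hnx using hstep
  let S : ℕ → List ℕ := fun n => Nat.rec [] (fun _ s => s ++ [nx s]) n
  have hS : ∀ n, S (n + 1) = S n ++ [nx (S n)] := fun n => rfl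
  have hSx : ∀ n, (List.range n).map (fun i => nx (S i)) = S n := by
    intro n
    induction n with
    | zero => rfl
    | succ n ih => rw [List.range_succ, List.map_append, ih, hS]; rfl
  have hSH : ∀ n, g ∈ H (S n) := by
    intro n
    induction n with
    | zero => exact h0
    | succ n ih => rw [hS]; exact hnx _ ih
  refine Set.mem_iUnion.mpr ⟨fun i => nx (S i), Set.mem_iInter.mpr fun n => ?_⟩
  rw [hSx]
  exact (hSH n).1

end Ramsey

section Transfer
open Rig

theorem ker_mem (g : Rig) : Setoid.ker g.fn ∈ Einf := by
  change (classes (Setoid.ker g.fn)).Infinite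
  refine Set.infinite_of_injective_forall_mem (f := fun k : ℕ => {y | g.fn y = k}) ?_ ?_
  · intro k l hkl
    obtain ⟨x, hx⟩ := g.surj k
    have : x ∈ {y | g.fn y = l} := by
      have h1 : x ∈ {y | g.fn y = k} := hx
      exact (Set.ext_iff.mp hkl x).mp h1
    exact hx.symm.trans this
  · intro k
    obtain ⟨x, hx⟩ := g.surj k
    refine ⟨x, ?_⟩
    ext y
    change g.fn y = k ↔ g.fn x = g.fn y
    rw [hx, eq_comm]

/-- The equivalence relation attached to a rigid surjection. -/
def toE (g : Rig) : ↥Einf := ⟨Setoid.ker g.fn, ker_mem g⟩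

theorem toE_r (g : Rig) (x y : ℕ) : (toE g).1.r x y ↔ g.fn x = g.fn y := Iff.rfl

theorem toE_surj (Y : ↥Einf) : ∃ g, toE g = Y := by
  classical
  obtain ⟨Y, hY⟩ := Y
  have hex : ∀ x, ∃ y, Y.r x y := fun x => ⟨x, Y.refl x⟩
  let ρ : ℕ → ℕ := fun x => Nat.find (hex x)
  have hρ : ∀ x, Y.r x (ρ x) := fun x => Nat.find_spec (hex x)
  have hρmin : ∀ x y, Y.r x y → ρ x ≤ y := fun x y h => Nat.find_min' (hex x) h
  have hρle : ∀ x, ρ x ≤ x := fun x => hρmin x x (Y.refl x)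
  let p : ℕ → Prop := fun x => x ∈ minReps Y
  have hpρ : ∀ x, p (ρ x) := fun x m hm => hρmin x m (Y.trans (hρ x) hm)
  have hρfix : ∀ x, p x → ρ x = x := fun x hx => le_antisymm (hρle x) (hx _ (hρ x))
  have hρeq : ∀ x y, Y.r x y ↔ ρ x = ρ y := by
    intro x y
    constructor
    · intro h
      exact le_antisymm (hρmin _ _ (Y.trans h (hρ y))) (hρmin _ _ (Y.trans (Y.symm h) (hρ x)))
    · intro h
      have h1 := hρ x
      rw [h] at h1
      exact Y.trans h1 (Y.symm (hρ y))
  have hinf : (Set.ofPred p).Infinite := by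
    intro hfin
    apply (show (classes Y).Infinite from hY)
    refine (hfin.image (fun x => {y | Y.r x y})).subset ?_
    rintro C ⟨x, rfl⟩
    refine ⟨ρ x, hpρ x, ?_⟩
    ext y
    exact ⟨fun h => Y.trans (hρ x) h, fun h => Y.trans (Y.symm (hρ x)) h⟩
  have hnth : ∀ k, p (Nat.nth p k) := fun k => Nat.nth_mem_of_infinite hinf k
  have hval : ∀ k, Nat.count p (ρ (Nat.nth p k)) = k := fun k => by
    rw [hρfix _ (hnth k), Nat.count_nth_of_infinite hinf]
  refine ⟨⟨fun x => Nat.count p (ρ x), ?_, ?_⟩, ?_⟩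
  · intro x k hk
    exact ⟨Nat.nth p k, (Nat.nth_lt_of_lt_count hk).trans_le (hρle x), hval k⟩
  · intro k
    exact ⟨Nat.nth p k, hval k⟩
  · apply Subtype.ext
    apply Setoid.ext
    intro x y
    change Nat.count p (ρ x) = Nat.count p (ρ y) ↔ Y.r x y
    rw [hρeq]
    exact ⟨fun h => Nat.count_injective (hpρ x) (hpρ y) h, fun h => by rw [h]⟩

theorem coarsens_factor {f g : Rig} (h : Coarsens (toE g).1 (toE f).1) : ∃ e, g = e * f := by
  choose φ hφ1 hφ2 using f.first_occ
  have hc : ∀ x y, f.fn x = f.fn y → g.fn x = g.fn y := h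
  have key : ∀ x, g.fn (φ (f.fn x)) = g.fn x := fun x => hc _ _ (hφ1 _)
  refine ⟨⟨fun k => g.fn (φ k), ?_, ?_⟩, ?_⟩
  · intro k i hi
    obtain ⟨y, hy, rfl⟩ := g.rigid _ i hi
    exact ⟨f.fn y, hφ2 k y hy, key y⟩
  · intro k
    obtain ⟨x, rfl⟩ := g.surj k
    exact ⟨f.fn x, key x⟩
  · ext x
    exact (key x).symm

theorem coarsens_mul (f e : Rig) : Coarsens (toE (e * f)).1 (toE f).1 := by
  intro a b hab
  exact congrArg e.fn hab

theorem pRep_eq (g : Rig) (n x : ℕ) (hx : g.fn x = n) (hlt : ∀ y < x, g.fn y < n) :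
    pRep (toE g).1 n = x := by
  classical
  have hmem : ∀ z, (∀ y < z, g.fn y < g.fn z) ↔ z ∈ minReps (toE g).1 := by
    intro z
    constructor
    · intro h m hm
      by_contra hc
      have h1 := h m (by omega)
      have h2 : g.fn z = g.fn m := hm
      omega
    · intro h y hy
      by_contra hc
      have h1 : ∀ m, g.fn z = g.fn m → z ≤ m := h
      rcases (not_lt.mp hc).lt_or_eq with h2 | h2
      · obtain ⟨w, hw, hwz⟩ := g.rigid y _ h2
        have := h1 w hwz.symm
        omega
      · have := h1 y h2
        omega
  have hxm : x ∈ minReps (toE g).1 := (hmem x).mp (by rw [hx]; exact hlt)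
  have hcount : Nat.count (· ∈ minReps (toE g).1) x = n := by
    rw [Nat.count_eq_card_filter_range]
    refine (Finset.card_bij (t := Finset.range n) (fun a _ => g.fn a) ?_ ?_ ?_).trans
      (Finset.card_range n)
    · intro a ha
      rw [Finset.mem_filter, Finset.mem_range] at ha
      exact Finset.mem_range.mpr (hlt a ha.1)
    · intro a ha b hb hab
      rw [Finset.mem_filter] at ha hb
      exact le_antisymm (ha.2 b hab) (hb.2 a hab.symm)
    · intro k hk
      rw [Finset.mem_range] at hk
      obtain ⟨z, hz, hzl⟩ := g.first_occ k
      refine ⟨z, ?_, hz⟩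
      rw [Finset.mem_filter, Finset.mem_range]
      refine ⟨?_, (hmem z).mp (by rw [hz]; exact hzl)⟩
      by_contra hc
      rcases (not_lt.mp hc).lt_or_eq with h | h
      · have := hzl x h
        omega
      · subst h
        omega
  unfold pRep
  rw [← hcount]
  exact Nat.nth_count (p := (· ∈ minReps (toE g).1)) hxm

theorem approx_mul {n : ℕ} (g e : Rig) (he : Fx n e) :
    approx n (toE (e * g)).1 = approx n (toE g).1 := by
  obtain ⟨x, hx, hlt⟩ := g.first_occ n
  have hsame : ∀ y < x, (e * g).fn y = g.fn y := fun y hy => he _ (hlt y hy).le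
  have h1 := pRep_eq g n x hx hlt
  have h2 := pRep_eq (e * g) n x (by rw [mul_fn, hx, he n le_rfl])
    (fun y hy => by rw [hsame y hy]; exact hlt y hy)
  ext q
  change (q.1 < pRep (toE (e * g)).1 n ∧ q.2 < pRep (toE (e * g)).1 n ∧
    (e * g).fn q.1 = (e * g).fn q.2) ↔ (q.1 < pRep (toE g).1 n ∧ q.2 < pRep (toE g).1 n ∧
    g.fn q.1 = g.fn q.2)
  rw [h1, h2]
  constructor
  · rintro ⟨a, b, c⟩
    rw [hsame _ a, hsame _ b] at c
    exact ⟨a, b, c⟩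
  · rintro ⟨a, b, c⟩
    rw [hsame _ a, hsame _ b]
    exact ⟨a, b, c⟩

theorem open_pre {U : Set ↥Einf} (hU : (ellentuckTop Einf).IsOpen U) : ROpen (toE ⁻¹' U) := by
  have hU' : TopologicalSpace.GenerateOpen {U | ∃ a E, U = basicSet Einf a E} U := hU
  induction hU' with
  | basic s hs =>
    obtain ⟨a, E, rfl⟩ := hs
    rintro g ⟨hc, n, hn⟩
    refine ⟨n, ?_⟩
    rintro _ ⟨e, he, rfl⟩
    refine ⟨fun x y hxy => coarsens_mul g e x y (hc x y hxy), n, ?_⟩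
    rw [approx_mul g e he, hn]
  | univ => exact fun g _ => ⟨0, fun _ _ => Set.mem_univ _⟩
  | inter s t hs ht ihs iht =>
    rintro g ⟨h1, h2⟩
    obtain ⟨n, hn⟩ := ihs hs g h1
    obtain ⟨m, hm⟩ := iht ht g h2
    exact ⟨n + m, fun x hx => ⟨hn (Nb.anti (by omega) g hx), hm (Nb.anti (by omega) g hx)⟩⟩
  | sUnion S hS ih =>
    rintro g ⟨s, hs, hg⟩
    obtain ⟨n, hn⟩ := ih s hs (hS s hs) g hg
    exact ⟨n, fun x hx => ⟨s, hs, hn hx⟩⟩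

theorem souslin_pre {Y : Set ↥Einf} (hY : SouslinMeasurable (ellentuckTop Einf) Y) :
    Rams (toE ⁻¹' Y) := by
  refine hY {Y | Rams (toE ⁻¹' Y)} ?_ ?_ ?_ ?_
  · intro U hU
    exact (open_pre hU).rams
  · intro A hA
    exact Rams.compl hA
  · intro A hA B hB
    exact Rams.union hA hB
  · intro f hf
    have : toE ⁻¹' (souslinOp f) = souslinOp (fun s => toE ⁻¹' (f s)) := by
      simp only [souslinOp, Set.preimage_iUnion, Set.preimage_iInter]
    change Rams (toE ⁻¹' (souslinOp f))
    rw [this]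
    exact Rams.souslin hf

end Transfer

/-- **Dual Silver theorem** (Carlson–Simpson; Souslin measurable form).
For every finite Souslin measurable colouring `c` of `𝓔_∞` (with respect to the
Ellentuck topology), there is `X ∈ 𝓔_∞` such that `c` is constant on `𝓔_∞ ↾ X`. -/
theorem dualSilver (m : ℕ) (c : ↥Einf → Fin m)
    (hc : ∀ i : Fin m, SouslinMeasurable (ellentuckTop Einf) {E | c E = i}) :
    ∃ X : ↥Einf, ∀ Y Z : ↥Einf,
      Coarsens Y.1 X.1 → Coarsens Z.1 X.1 → c Y = c Z := by
  have hdec : ∀ S : Finset (Fin m), ∃ f : Rig, ∀ i ∈ S,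
      (∀ e, c (toE (e * f)) = i) ∨ ∀ e, c (toE (e * f)) ≠ i := by
    intro S
    induction S using Finset.induction_on with
    | empty => exact ⟨1, by simp⟩
    | insert a S _ ih =>
      obtain ⟨f, hf⟩ := ih
      obtain ⟨h, hh, hx⟩ := souslin_pre (hc a) 0 f
      refine ⟨h * f, ?_⟩
      intro i hi
      rcases Finset.mem_insert.mp hi with rfl | hi
      · rcases hx with hx | hx
        · exact Or.inl fun e => hx ⟨e, Rig.Fx.zero e, rfl⟩
        · exact Or.inr fun e => hx _ ⟨e, Rig.Fx.zero e, rfl⟩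
      · rcases hf i hi with h1 | h1
        · exact Or.inl fun e => h1 (e * h)
        · exact Or.inr fun e => h1 (e * h)
  obtain ⟨f, hf⟩ := hdec Finset.univ
  have hall : ∀ e, c (toE (e * f)) = c (toE f) := by
    rcases hf (c (toE f)) (Finset.mem_univ _) with h | h
    · exact h
    · exact absurd rfl (h 1)
  have hcol : ∀ Y : ↥Einf, Coarsens Y.1 (toE f).1 → c Y = c (toE f) := by
    intro Y hY
    obtain ⟨g, rfl⟩ := toE_surj Y
    obtain ⟨e, rfl⟩ := coarsens_factor hY
    exact hall e
  exact ⟨toE f, fun Y Z hY hZ => (hcol Y hY).trans (hcol Z hZ).symm⟩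

end DualRamsey
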